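/- Let K be an infinite field and L a field extension of K. If two n×n matrices M, N with entries in K are conjugate over L (i.e., there exists P ∈ GLₙ(L) with PMP⁻¹ = N), then they are conjugate over K (there exists Q ∈ GLₙ(K) with QMQ⁻¹ = N). -/

import Mathlib

/-!
The matrices `Q` with `Q * M = N * Q` form a linear subspace, and every `K`-linear functional
`L → K`, applied entrywise, carries the intertwiners over `L` into the intertwiners over `K`.
Writing an invertible intertwiner over `L` in a `K`-basis `b` of `L` as `∑ i, b i • A i`, each
coordinate matrix `A i` is therefore an intertwiner over `K`. The polynomial `det (∑ i, X i • A i)`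
with coefficients in `K` does not vanish at the point `b`, so it is a nonzero polynomial; as `K` is
infinite, it does not vanish at some point `x` of `K`, and `∑ i, x i • A i` is the desired matrix.
-/

section Intertwiners

variable {K m n ι : Type*} [CommSemiring K] [Fintype m] [Fintype n]

/-- The space of matrices intertwining two families of square matrices: those `Q` with
`Q * M i = N i * Q` for all `i`. Invertible intertwiners are the matrices that conjugate all `M i`
to `N i` simultaneously. -/
def intertwiningMatrices (M : ι → Matrix n n K) (N : ι → Matrix m m K) :
    Submodule K (Matrix m n K) where
  carrier := {Q | ∀ i, Q * M i = N i * Q}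
  add_mem' hQ hR i := by rw [Matrix.add_mul, Matrix.mul_add, hQ i, hR i]
  zero_mem' i := by rw [Matrix.zero_mul, Matrix.mul_zero]
  smul_mem' c Q hQ i := by rw [Matrix.smul_mul, Matrix.mul_smul, hQ i]

theorem mem_intertwiningMatrices {M : ι → Matrix n n K} {N : ι → Matrix m m K}
    {Q : Matrix m n K} : Q ∈ intertwiningMatrices M N ↔ ∀ i, Q * M i = N i * Q :=
  Iff.rfl

theorem units_mem_intertwiningMatrices_iff [DecidableEq n] {M N : ι → Matrix n n K}
    {Q : (Matrix n n K)ˣ} :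
    (Q : Matrix n n K) ∈ intertwiningMatrices M N ↔
      ∀ i, (Q : Matrix n n K) * M i * (Q⁻¹ : (Matrix n n K)ˣ) = N i := by
  simp only [mem_intertwiningMatrices, Units.mul_inv_eq_iff_eq_mul]

end Intertwiners

section LinearFunctional

variable {K L l m n : Type*} [CommSemiring K] [Semiring L] [Algebra K L] [Fintype m]

theorem mul_map_algebraMap_map_linearMap (P : Matrix l m L) (M : Matrix m n K) (f : L →ₗ[K] K) :
    (P * M.map (algebraMap K L)).map f = P.map f * M := by
  ext a c
  simp only [Matrix.map_apply, Matrix.mul_apply, map_sum, ← Algebra.commutes, ← Algebra.smul_def,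
    map_smul, smul_eq_mul, mul_comm]

theorem map_algebraMap_mul_map_linearMap (N : Matrix l m K) (P : Matrix m n L) (f : L →ₗ[K] K) :
    (N.map (algebraMap K L) * P).map f = N * P.map f := by
  ext a c
  simp only [Matrix.map_apply, Matrix.mul_apply, map_sum, ← Algebra.smul_def, map_smul,
    smul_eq_mul]

end LinearFunctional

theorem map_linearMap_mem_intertwiningMatrices {K L m n ι : Type*} [CommSemiring K]
    [CommSemiring L] [Algebra K L] [Fintype m] [Fintype n] {M : ι → Matrix n n K}
    {N : ι → Matrix m m K} {P : Matrix m n L}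
    (hP : P ∈ intertwiningMatrices (fun i ↦ (M i).map (algebraMap K L))
      (fun i ↦ (N i).map (algebraMap K L))) (f : L →ₗ[K] K) :
    P.map f ∈ intertwiningMatrices M N := fun i ↦ by
  rw [← mul_map_algebraMap_map_linearMap, hP i, map_algebraMap_mul_map_linearMap]

theorem exists_finset_sum_smul_map_coord_eq {K L m n ι : Type*} [CommSemiring K] [CommSemiring L]
    [Algebra K L] [Finite m] [Finite n] (b : Module.Basis ι K L) (P : Matrix m n L) :
    ∃ s : Finset ι, ∑ i ∈ s, b i • (P.map (b.coord i)).map (algebraMap K L) = P := by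
  classical
  cases nonempty_fintype m
  cases nonempty_fintype n
  let s := Finset.univ.biUnion fun ac : m × n ↦ (b.repr (P ac.1 ac.2)).support
  refine ⟨s, Matrix.ext fun a c ↦ ?_⟩
  have support_subset : (b.repr (P a c)).support ⊆ s :=
    Finset.subset_biUnion_of_mem (fun ac : m × n ↦ (b.repr (P ac.1 ac.2)).support)
      (Finset.mem_univ (a, c))
  calc (∑ i ∈ s, b i • (P.map (b.coord i)).map (algebraMap K L)) a c
      = ∑ i ∈ s, b.repr (P a c) i • b i := by
        simp only [Matrix.sum_apply, Matrix.smul_apply, Matrix.map_apply, Module.Basis.coord_apply,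
          smul_eq_mul, Algebra.smul_def, mul_comm]
    _ = Finsupp.linearCombination K b (b.repr (P a c)) :=
        (Finsupp.sum_of_support_subset _ support_subset (fun i k ↦ k • b i)
          fun _ _ ↦ zero_smul K _).symm
    _ = P a c := b.linearCombination_repr _

section Determinant

variable {K L m ι : Type*} [CommRing K] [CommRing L] [Algebra K L] [Fintype m] [DecidableEq m]

theorem aeval_det_sum_X_smul (s : Finset ι) (A : ι → Matrix m m K) (x : ι → L) :
    MvPolynomial.aeval x (∑ i ∈ s, (MvPolynomial.X i : MvPolynomial ι K) •
      (A i).map MvPolynomial.C).det = (∑ i ∈ s, x i • (A i).map (algebraMap K L)).det := by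
  rw [AlgHom.map_det]
  congr 1
  ext a c
  simp [Matrix.sum_apply, MvPolynomial.algHom_C]

variable [IsDomain K] [Infinite K]

theorem exists_det_sum_smul_ne_zero {s : Finset ι} {A : ι → Matrix m m K} {y : ι → L}
    (hy : (∑ i ∈ s, y i • (A i).map (algebraMap K L)).det ≠ 0) :
    ∃ x : ι → K, (∑ i ∈ s, x i • A i).det ≠ 0 := by
  contrapose! hy
  have det_eq_zero : (∑ i ∈ s, (MvPolynomial.X i : MvPolynomial ι K) •
      (A i).map MvPolynomial.C).det = 0 := MvPolynomial.funext fun x ↦ by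
    simpa [MvPolynomial.aeval_eq_eval, hy x] using aeval_det_sum_X_smul s A x
  rw [← aeval_det_sum_X_smul, det_eq_zero, map_zero]

theorem exists_mem_det_ne_zero_of_forall_map_mem [Module.Free K L]
    {W : Submodule K (Matrix m m K)} {P : Matrix m m L} (hP : P.det ≠ 0)
    (hW : ∀ f : L →ₗ[K] K, P.map f ∈ W) : ∃ Q ∈ W, Q.det ≠ 0 := by
  let b := Module.Free.chooseBasis K L
  obtain ⟨s, hs⟩ := exists_finset_sum_smul_map_coord_eq b P
  obtain ⟨x, hx⟩ := exists_det_sum_smul_ne_zero (hs.symm ▸ hP)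
  exact ⟨_, W.sum_mem fun i _ ↦ W.smul_mem (x i) (hW (b.coord i)), hx⟩

end Determinant

theorem stmt_9_general {K L m ι : Type*} [Field K] [Infinite K] [CommRing L] [Nontrivial L]
    [Algebra K L] [Fintype m] [DecidableEq m] (M N : ι → Matrix m m K)
    (h : ∃ P : GL m L, ∀ i, (P : Matrix m m L) * (M i).map (algebraMap K L) *
      ((P⁻¹ : GL m L) : Matrix m m L) = (N i).map (algebraMap K L)) :
    ∃ Q : GL m K, ∀ i, (Q : Matrix m m K) * M i * ((Q⁻¹ : GL m K) : Matrix m m K) = N i := by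
  obtain ⟨P, hP⟩ := h
  have P_mem := units_mem_intertwiningMatrices_iff.2 hP
  obtain ⟨Q, Q_mem, hQ⟩ := exists_mem_det_ne_zero_of_forall_map_mem P.det.ne_zero
    (map_linearMap_mem_intertwiningMatrices P_mem)
  exact ⟨Matrix.GeneralLinearGroup.mkOfDetNeZero Q hQ,
    units_mem_intertwiningMatrices_iff.1 Q_mem⟩

/-- Matrices over an infinite field `K` that are conjugate over a field extension `L`
are already conjugate over `K`. -/
theorem stmt_9 (K L : Type*) [Field K] [Infinite K] [Field L] [Algebra K L]
    (n : ℕ) (M N : Matrix (Fin n) (Fin n) K)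
    (h : ∃ P : GL (Fin n) L,
      (P : Matrix (Fin n) (Fin n) L) * M.map (algebraMap K L) * ((P⁻¹ : GL (Fin n) L) : Matrix (Fin n) (Fin n) L)
        = N.map (algebraMap K L)) :
    ∃ Q : GL (Fin n) K,
      (Q : Matrix (Fin n) (Fin n) K) * M * ((Q⁻¹ : GL (Fin n) K) : Matrix (Fin n) (Fin n) K) = N := by
  obtain ⟨P, hP⟩ := h
  obtain ⟨Q, hQ⟩ := stmt_9_general (fun _ : Unit ↦ M) (fun _ ↦ N) ⟨P, fun _ ↦ hP⟩
  exact ⟨Q, hQ ()⟩
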